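/- Let (S,[-,-,-]) be a semiheap with a biunit pair (a,b). Then: (i) b is a two-sided identity for the semigroup (S, ∘_a) where x ∘_a y := [x,a,y], so (S, ∘_a, b) is a monoid; (ii) the middle shift μ_{bb} : x ↦ [b,x,b] is a switch for (S, ∘_a), i.e. μ_{bb}(x ∘_a μ_{bb}(y) ∘_a z) = μ_{bb}(z) ∘_a y ∘_a μ_{bb}(x) for all x,y,z ∈ S; (iii) μ_{bb}(a) = b; and (iv) the original semiheap operation is recovered: [x,y,z] = x ∘_a μ_{bb}(y) ∘_a z for all x,y,z ∈ S. -/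

import Mathlib

/-!
In the `a`-retract `x ∘ y = [x, a, y]` of a semiheap,
`x ∘ [b, y, c] ∘ z = [[x, a, b], y, [c, a, z]]`.
Once `b` is an identity for `∘`, this says that `[x, y, z] = x ∘ φ y ∘ z` with `φ y = [b, y, b]`.
The switch law is then the para-associative law `[b, [x, y, z], b] = [[b, z, y], x, b]` with the
brackets `[x, y, z]`, `[b, z, y]` and the outer right-hand one expanded in this way.
-/

section

variable {S : Type*} {t : S → S → S → S} {a b : S}

/-- The ternary operation `t`, written `[x, y, z]` on paper, makes `S` a semiheap. -/
structure IsSemiheap (t : S → S → S → S) : Prop where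
  para_assoc_middle : ∀ v w x y z, t (t v w x) y z = t v (t y x w) z
  para_assoc_right : ∀ v w x y z, t (t v w x) y z = t v w (t x y z)

/-- `(a, b)` is a biunit pair for the ternary operation `t`. -/
structure IsBiunitPair (t : S → S → S → S) (a b : S) : Prop where
  left : ∀ x, t a b x = x
  right : ∀ x, t x a b = x

/-- The product `∘_a` of the `a`-retract of `(S, t)`, as a bare binary operation, since each
choice of `a` gives a different one on the same type. -/
def retract (t : S → S → S → S) (a x y : S) : S := t x a y

/-- The middle shift `μ_{ab}` of `(S, t)`. -/
def middleShift (t : S → S → S → S) (a b x : S) : S := t a x b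

/-- `φ` is a switch for the binary operation `op`. The triple products are bracketed to the left,
which is immaterial for a semigroup. -/
def IsSwitch (op : S → S → S) (φ : S → S) : Prop :=
  ∀ x y z, φ (op (op x (φ y)) z) = op (op (φ z) y) (φ x)

namespace IsSemiheap

theorem associative_retract (ht : IsSemiheap t) (a : S) : Std.Associative (retract t a) :=
  ⟨fun x y z => ht.para_assoc_right x a y a z⟩

theorem retract_middleShift_retract (ht : IsSemiheap t) (a b c x y z : S) :
    retract t a (retract t a x (middleShift t b c y)) z = t (retract t a x b) y (retract t a c z) :=
  calc
    t (t x a (t b y c)) a z = t x a (t (t b y c) a z) := ht.para_assoc_right ..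
    _ = t x a (t b y (t c a z)) := by rw [ht.para_assoc_right b y c]
    _ = t (t x a b) y (t c a z) := (ht.para_assoc_right ..).symm

theorem lawfulIdentity_retract (ht : IsSemiheap t) (hab : IsBiunitPair t a b) :
    Std.LawfulIdentity (retract t a) b where
  left_id x :=
    calc
      t b a x = t (t a b b) a x := by rw [hab.left b]
      _ = t a (t a b b) x := ht.para_assoc_middle ..
      _ = x := by rw [hab.left b, hab.left x]
  right_id := hab.right

theorem eq_retract_middleShift_retract (ht : IsSemiheap t)
    (hb : Std.LawfulIdentity (retract t a) b) (x y z : S) :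
    t x y z = retract t a (retract t a x (middleShift t b b y)) z := by
  rw [ht.retract_middleShift_retract, hb.right_id, hb.left_id]

theorem isSwitch_middleShift (ht : IsSemiheap t) (hb : Std.LawfulIdentity (retract t a) b) :
    IsSwitch (retract t a) (middleShift t b b) := by
  intro x y z
  have expand := ht.eq_retract_middleShift_retract hb
  calc
    middleShift t b b (retract t a (retract t a x (middleShift t b b y)) z)
      = t b (t x y z) b := by rw [← expand, middleShift]
    _ = t (t b z y) x b := (ht.para_assoc_middle ..).symm
    _ = retract t a (t b z y) (middleShift t b b x) := by rw [expand _ x b, hb.right_id]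
    _ = retract t a (retract t a (middleShift t b b z) y) (middleShift t b b x) := by
      rw [expand b z y, hb.left_id]

end IsSemiheap

theorem middleShift_eq_of_rightIdentity (hb : Std.LawfulRightIdentity (retract t a) b) :
    middleShift t b b a = b :=
  hb.right_id b

end

/-- For a biunit pair `(a,b)` of a semiheap `(S,t)`:
(i) `(S, ∘_a, b)` is a monoid (`x ∘_a y := t x a y`, identity `b`);
(ii) `μ_{bb} : x ↦ t b x b` is a switch for `(S, ∘_a)`;
(iii) `μ_{bb} a = b`;
(iv) `t x y z = x ∘_a μ_{bb} y ∘_a z`. -/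
theorem stmt_16 {S : Type*} (t : S → S → S → S)
    (h1 : ∀ a b c d e, t (t a b c) d e = t a (t d c b) e)
    (h2 : ∀ a b c d e, t (t a b c) d e = t a b (t c d e))
    (a b : S) (hbi : ∀ x, t a b x = x ∧ t x a b = x) :
    ((∀ x y z, t (t x a y) a z = t x a (t y a z)) ∧
     (∀ x, t x a b = x) ∧ (∀ x, t b a x = x)) ∧
    (∀ x y z, t b (t (t x a (t b y b)) a z) b = t (t (t b z b) a y) a (t b x b)) ∧
    (t b a b = b) ∧
    (∀ x y z, t x y z = t (t x a (t b y b)) a z) := by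
  have ht : IsSemiheap t := ⟨h1, h2⟩
  have hab : IsBiunitPair t a b := ⟨fun x => (hbi x).1, fun x => (hbi x).2⟩
  have hb : Std.LawfulIdentity (retract t a) b := ht.lawfulIdentity_retract hab
  exact ⟨⟨(ht.associative_retract a).assoc, hb.right_id, hb.left_id⟩,
    ht.isSwitch_middleShift hb,
    middleShift_eq_of_rightIdentity hb.toLawfulRightIdentity,
    ht.eq_retract_middleShift_retract hb⟩
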